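/- For a ring R, the following conditions are equivalent: (1) every finitely generated projective right R-module is CS-Rickart; (2) the free right R-module R^(n) is a CS-Rickart module for every n ∈ ℕ; (3) Mat_n(R) is a right ACS ring for every n ∈ ℕ; (4) for some positive integer m, every finitely generated right ideal of Mat_m(R) has the form P ⊕ S, where P is a projective Mat_m(R)-module and S is a singular right ideal of Mat_m(R); (5) R is a right weakly semihereditary ring; (6) every finitely generated submodule of a projective right R-module has the form P₁ ⊕ … ⊕ Pₙ ⊕ S, where each P₁, …, Pₙ is a projective module isomorphic to a submodule of R_R and S is a singular module. -/

import Mathlib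

namespace CSRickartPaper

section Defs

variable {R : Type*} [Ring R] {M : Type*} [AddCommGroup M] [Module R M]

/-- `N` is an essential submodule of `P` (inside the ambient module `M`):
`N ≤ P` and every submodule of `P` intersecting `N` trivially is zero. -/
def EssentialIn (N P : Submodule R M) : Prop :=
  N ≤ P ∧ ∀ K : Submodule R M, K ≤ P → N ⊓ K = ⊥ → K = ⊥

/-- `N` is a small (superfluous) submodule of `P`. -/
def SmallIn (N P : Submodule R M) : Prop :=
  N ≤ P ∧ ∀ K : Submodule R M, K ≤ P → N ⊔ K = P → K = P

/-- `N` is a direct summand of `M`. -/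
def IsDirectSummand (N : Submodule R M) : Prop :=
  ∃ K : Submodule R M, IsCompl N K

/-- `N` lies above the direct summand `D` of `M`: `M = D ⊕ K`, `D ≤ N` and
`N ⊓ K` is small in `K`. -/
def LiesAbove (N D : Submodule R M) : Prop :=
  ∃ K : Submodule R M, IsCompl D K ∧ D ≤ N ∧ SmallIn (N ⊓ K) K

/-- `N` lies above a direct summand of `M`. -/
def LiesAboveSummand (N : Submodule R M) : Prop :=
  ∃ D : Submodule R M, LiesAbove N D

end Defs

section ModuleDefs

variable (R : Type*) [Ring R] (M : Type*) [AddCommGroup M] [Module R M]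

/-- `M` is a CS-Rickart module: the kernel of every endomorphism is essential
in a direct summand `eM`, `e` an idempotent endomorphism. -/
def IsCSRickart : Prop :=
  ∀ φ : Module.End R M, ∃ e : Module.End R M, IsIdempotentElem e ∧
    EssentialIn (LinearMap.ker φ) (LinearMap.range e)

/-- `M` is a d-CS-Rickart module: the image of every endomorphism lies above a
direct summand of `M`. -/
def IsDCSRickart : Prop :=
  ∀ φ : Module.End R M, LiesAboveSummand (LinearMap.range φ)

/-- `M` is a Rickart module. -/
def IsRickart : Prop :=
  ∀ φ : Module.End R M, ∃ e : Module.End R M, IsIdempotentElem e ∧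
    LinearMap.ker φ = LinearMap.range e

/-- `M` is a dual Rickart module. -/
def IsDRickart : Prop :=
  ∀ φ : Module.End R M, ∃ e : Module.End R M, IsIdempotentElem e ∧
    LinearMap.range φ = LinearMap.range e

/-- `M` is a CS (extending) module. -/
def IsCSModule : Prop :=
  ∀ N : Submodule R M, ∃ D : Submodule R M, IsDirectSummand D ∧ EssentialIn N D

/-- `M` is a lifting (d-CS) module. -/
def IsLifting : Prop :=
  ∀ N : Submodule R M, LiesAboveSummand N

/-- `M` is a singular module: the annihilator of every element is an essential
ideal of `R`. -/
def IsSingularModule : Prop :=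
  ∀ m : M, EssentialIn (LinearMap.ker (LinearMap.toSpanSingleton R M m)) (⊤ : Submodule R R)

/-- `M` is uniform: every nonzero submodule is essential. -/
def IsUniformModule : Prop :=
  ∀ N : Submodule R M, N ≠ ⊥ → EssentialIn N (⊤ : Submodule R M)

/-- `M` satisfies the C₂ condition: every submodule isomorphic to a direct
summand is itself a direct summand. -/
def IsC2 : Prop :=
  ∀ N D : Submodule R M, IsDirectSummand D → Nonempty (N ≃ₗ[R] D) → IsDirectSummand N

/-- `M` is K-nonsingular. -/
def IsKNonsingular : Prop :=
  ∀ φ : Module.End R M, ∀ N : Submodule R M, EssentialIn N (⊤ : Submodule R M) →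
    N ≤ LinearMap.ker φ → φ = 0

/-- `M` is T-noncosingular. -/
def IsTNoncosingular : Prop :=
  ∀ φ : Module.End R M, φ ≠ 0 → ¬ SmallIn (LinearMap.range φ) (⊤ : Submodule R M)

/-- `M` is an SIP-CS module. -/
def IsSIPCS : Prop :=
  ∀ A B : Submodule R M, IsDirectSummand A → IsDirectSummand B →
    ∃ D : Submodule R M, IsDirectSummand D ∧ EssentialIn (A ⊓ B) D

/-- `M` is an SSP-d-CS module. -/
def IsSSPdCS : Prop :=
  ∀ A B : Submodule R M, IsDirectSummand A → IsDirectSummand B →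
    LiesAboveSummand (A ⊔ B)

end ModuleDefs

section RelDefs

variable (R : Type*) [Ring R] (M N : Type*) [AddCommGroup M] [Module R M]
  [AddCommGroup N] [Module R N]

/-- `M` is relatively CS-Rickart to `N`. -/
def IsRelCSRickart : Prop :=
  ∀ φ : M →ₗ[R] N, ∃ e : Module.End R M, IsIdempotentElem e ∧
    EssentialIn (LinearMap.ker φ) (LinearMap.range e)

/-- `M` is relatively d-CS-Rickart to `N`. -/
def IsRelDCSRickart : Prop :=
  ∀ φ : M →ₗ[R] N, LiesAboveSummand (LinearMap.range φ)

/-- `N` is `M`-injective. -/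
def IsRelInjective : Prop :=
  ∀ (A : Submodule R M) (f : A →ₗ[R] N), ∃ g : M →ₗ[R] N, ∀ a : A, g a = f a

end RelDefs

section RingDefs

variable (R : Type*) [Ring R]

/-- The annihilator of an element `a` of `R`, as an ideal (kernel of `r ↦ r • a`). -/
def annElem (a : R) : Submodule R R :=
  LinearMap.ker (LinearMap.toSpanSingleton R R a)

/-- The annihilator of a subset `X` of `R`. -/
def annSet (X : Set R) : Submodule R R :=
  ⨅ x ∈ X, annElem R x

/-- The principal ideal generated by `e`, i.e. the image of `r ↦ r • e`. -/
def idealGen (e : R) : Submodule R R :=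
  LinearMap.range (LinearMap.toSpanSingleton R R e)

/-- `R` is an ACS ring: the annihilator of every element is essential in a
direct summand `eR` of `R`. -/
def IsACSRing : Prop :=
  ∀ a : R, ∃ e : R, IsIdempotentElem e ∧ EssentialIn (annElem R a) (idealGen R e)

/-- `R` is an essentially Baer ring. -/
def IsEssentiallyBaer : Prop :=
  ∀ X : Set R, X.Nonempty → ∃ e : R, IsIdempotentElem e ∧
    EssentialIn (annSet R X) (idealGen R e)

/-- The Jacobson radical of the ring `R`. -/
noncomputable def jacRad : Ideal R := Ideal.jacobson (⊥ : Ideal R)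

/-- `R` is semiregular: `R/J(R)` is von Neumann regular and idempotents lift
modulo `J(R)` (stated elementwise). -/
def IsSemiregularRing : Prop :=
  (∀ a : R, ∃ b : R, a - a * b * a ∈ jacRad R) ∧
  (∀ a : R, a - a * a ∈ jacRad R →
    ∃ e : R, IsIdempotentElem e ∧ e - a ∈ jacRad R)

/-- `J(R)` coincides with the singular ideal `Z(R)`. -/
def JacEqSingular : Prop :=
  ∀ a : R, a ∈ jacRad R ↔ EssentialIn (annElem R a) (⊤ : Submodule R R)

end RingDefs

section GenDefs

variable {R : Type*} [Ring R] {M : Type*} [AddCommGroup M] [Module R M]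

/-- A submodule is `n`-generated if it is spanned by at most `n` elements. -/
def NGen (n : ℕ) (N : Submodule R M) : Prop :=
  ∃ f : Fin n → M, Submodule.span R (Set.range f) = N

end GenDefs

end CSRickartPaper


namespace CSRickartPaper

section Basic
variable {R : Type*} [Ring R] {M : Type*} [AddCommGroup M] [Module R M]
  {Q : Type*} [AddCommGroup Q] [Module R Q]

theorem essentialIn_iff (N P : Submodule R M) :
    EssentialIn N P ↔ N ≤ P ∧ ∀ x ∈ P, x ≠ 0 → ∃ r : R, r • x ∈ N ∧ r • x ≠ 0 := by
  constructor
  · rintro ⟨h1, h2⟩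
    refine ⟨h1, fun x hx hx0 => ?_⟩
    by_contra hcon
    push Not at hcon
    have := h2 (R ∙ x) (by simpa using hx) (by
      rw [eq_bot_iff]
      rintro y ⟨hy1, hy2⟩
      obtain ⟨r, rfl⟩ := Submodule.mem_span_singleton.1 hy2
      simpa using hcon r hy1)
    exact hx0 (by simpa using this)
  · rintro ⟨h1, h2⟩
    refine ⟨h1, fun K hK hNK => ?_⟩
    rw [eq_bot_iff]
    intro x hx
    by_contra hx0
    obtain ⟨r, hr, hr0⟩ := h2 x (hK hx) (by simpa using hx0)
    have : r • x ∈ N ⊓ K := ⟨hr, K.smul_mem r hx⟩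
    rw [hNK] at this
    exact hr0 (by simpa using this)

/-- The key lemma on projective modules: a submodule with singular quotient is essential. -/
theorem essential_of_singular_quot (K L : Submodule R M) [Module.Projective R K] (hLK : L ≤ K)
    (h : ∀ p ∈ K, ∀ a : R, a ≠ 0 → ∃ r : R, (r * a) • p ∈ L ∧ r * a ≠ 0) :
    EssentialIn L K := by
  classical
  rw [essentialIn_iff]
  refine ⟨hLK, fun x hx hx0 => ?_⟩
  obtain ⟨s, hs⟩ := Module.projective_def.1 (inferInstance : Module.Projective R K)
  have key : ∀ T : Finset K, ∃ r : R, r • (⟨x, hx⟩ : K) ≠ 0 ∧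
      ∀ t ∈ T, (s (r • (⟨x, hx⟩ : K)) t) • (t : M) ∈ L := by
    intro T
    induction T using Finset.induction_on with
    | empty => exact ⟨1, by simpa using hx0, by simp⟩
    | insert t T _ ih =>
      obtain ⟨r, hr0, hr⟩ := ih
      by_cases hz : s (r • (⟨x, hx⟩ : K)) t = 0
      · refine ⟨r, hr0, ?_⟩
        intro t' ht'
        rcases Finset.mem_insert.1 ht' with rfl | h'
        · rw [hz]; simp
        · exact hr t' h'
      · obtain ⟨q, hq, hq0⟩ := h t t.2 _ hz
        refine ⟨q * r, ?_, ?_⟩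
        · intro h0
          apply hq0
          rw [mul_smul] at h0
          have := congrArg (fun y => s y t) h0
          simpa only [map_smul, Finsupp.smul_apply, smul_eq_mul, map_zero, Finsupp.zero_apply]
            using this
        · intro t' ht'
          rw [mul_smul, map_smul, Finsupp.smul_apply, smul_eq_mul]
          rcases Finset.mem_insert.1 ht' with rfl | h'
          · exact hq
          · rw [mul_smul]; exact L.smul_mem _ (hr t' h')
  obtain ⟨r, hr0, hr⟩ := key (s ⟨x, hx⟩).support
  refine ⟨r, ?_, fun h0 => hr0 (by ext; simpa using h0)⟩
  have h1 := hs (r • (⟨x, hx⟩ : K))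
  have h2 : r • x = ((Finsupp.linearCombination R id (s (r • (⟨x, hx⟩ : K))) : K) : M) := by
    rw [h1]; rfl
  rw [h2, Finsupp.linearCombination_apply, Finsupp.sum, Submodule.coe_sum]
  refine Submodule.sum_mem _ fun t ht => hr t ?_
  rw [Finsupp.mem_support_iff] at ht ⊢
  intro h0
  apply ht
  rw [map_smul, Finsupp.smul_apply, h0, smul_zero]

/-- `N` is a direct sum of a projective and a singular submodule. -/
def HasDec (N : Submodule R M) : Prop :=
  ∃ P S : Submodule R M, Module.Projective R P ∧ IsSingularModule R S ∧ P ⊓ S = ⊥ ∧ P ⊔ S = N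

/-- kernel of `φ` is essential in a direct summand. -/
def KerCS (φ : M →ₗ[R] Q) : Prop :=
  ∃ e : Module.End R M, IsIdempotentElem e ∧ EssentialIn (LinearMap.ker φ) (LinearMap.range e)

theorem idem_apply {e : Module.End R M} (he : IsIdempotentElem e) (x : M) : e (e x) = e x :=
  congrArg (fun f : Module.End R M => f x) he

theorem mem_range_idem {e : Module.End R M} (he : IsIdempotentElem e) {x : M} :
    x ∈ LinearMap.range e ↔ e x = x :=
  ⟨by rintro ⟨y, rfl⟩; exact idem_apply he y, fun h => ⟨x, h⟩⟩

theorem projective_range_idem [Module.Projective R M] {e : Module.End R M}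
    (he : IsIdempotentElem e) : Module.Projective R (LinearMap.range e) := by
  refine Module.Projective.of_split (LinearMap.range e).subtype e.rangeRestrict ?_
  ext x
  exact (mem_range_idem he).1 x.2

theorem singular_map {φ : M →ₗ[R] Q} {A : Submodule R M}
    (h : EssentialIn (LinearMap.ker φ) A) : IsSingularModule R (A.map φ) := by
  rw [essentialIn_iff] at h
  rintro ⟨_, a, ha, rfl⟩
  rw [essentialIn_iff]
  refine ⟨le_top, fun c _ hc => ?_⟩
  by_cases h0 : c • a = 0
  · refine ⟨1, ?_, by simpa using hc⟩
    rw [LinearMap.mem_ker]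
    ext
    have := congrArg φ h0
    simpa using this
  · obtain ⟨r, hr, hr0⟩ := h.2 _ (A.smul_mem c ha) h0
    refine ⟨r, ?_, fun hz => hr0 ?_⟩
    · rw [LinearMap.mem_ker] at hr ⊢
      ext
      simpa [mul_smul] using hr
    · rw [← mul_smul]
      rw [smul_eq_mul] at hz
      rw [hz, zero_smul]

theorem KerCS.hasDec [Module.Projective R M] {φ : M →ₗ[R] Q} (h : KerCS φ) :
    HasDec (LinearMap.range φ) := by
  obtain ⟨e, he, hess⟩ := h
  have he' : IsIdempotentElem (1 - e) := he.one_sub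
  have hinj : ∀ x ∈ LinearMap.range (1 - e), ∀ y ∈ LinearMap.range e, φ x = φ y → x = 0 := by
    intro x hx y hy hxy
    have h1 : x - y ∈ LinearMap.range e := hess.1 (by simp [hxy])
    have h2 : x ∈ LinearMap.range e := by simpa using add_mem h1 hy
    rw [mem_range_idem he'] at hx
    rw [mem_range_idem he] at h2
    rw [← hx]
    simp [h2]
  refine ⟨(LinearMap.range (1 - e)).map φ, (LinearMap.range e).map φ, ?_, singular_map hess, ?_, ?_⟩
  · have := projective_range_idem he'
    let f : LinearMap.range (1 - e) →ₗ[R] (LinearMap.range (1 - e)).map φ :=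
      φ.submoduleMap _
    have hf : Function.Bijective f := by
      constructor
      · rw [← LinearMap.ker_eq_bot, LinearMap.ker_eq_bot']
        intro x hx
        have h1 : φ x = 0 := congrArg Subtype.val hx
        ext
        exact hinj x x.2 0 (zero_mem _) (by simpa using h1)
      · exact LinearMap.submoduleMap_surjective _ _
    exact Module.Projective.of_equiv (LinearEquiv.ofBijective f hf)
  · rw [eq_bot_iff]
    rintro _ ⟨⟨x, hx, rfl⟩, y, hy, hxy⟩
    have := hinj x hx y hy hxy.symm
    simp [this]
  · rw [← Submodule.map_sup, LinearMap.range_eq_map φ]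
    congr 1
    rw [eq_top_iff]
    intro x _
    have : x = (1 - e) x + e x := by simp
    rw [this]
    exact Submodule.add_mem_sup ⟨x, rfl⟩ ⟨x, rfl⟩

theorem HasDec.kerCS [Module.Projective R M] {φ : M →ₗ[R] Q}
    (h : HasDec (LinearMap.range φ)) : KerCS φ := by
  obtain ⟨P, S, hP, hS, hd, hs⟩ := h
  let g : P.comap φ →ₗ[R] P := φ.restrict (fun x hx => hx)
  have hg : Function.Surjective g := by
    rintro ⟨p, hp⟩
    have : p ∈ LinearMap.range φ := hs ▸ Submodule.mem_sup_left hp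
    obtain ⟨x, rfl⟩ := this
    exact ⟨⟨x, hp⟩, rfl⟩
  obtain ⟨σ, hσ⟩ := Module.projective_lifting_property g LinearMap.id hg
  let τ : P →ₗ[R] M := (P.comap φ).subtype ∘ₗ σ
  have hτ : ∀ p, φ (τ p) = p := fun p => congrArg Subtype.val (LinearMap.congr_fun hσ p)
  have hc : IsCompl (S.comap φ) (LinearMap.range τ) := by
    constructor
    · rw [Submodule.disjoint_def]
      rintro _ hx ⟨p, rfl⟩
      have h1 : (p : Q) ∈ P ⊓ S := ⟨p.2, by simpa [hτ] using hx⟩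
      rw [hd] at h1
      have : p = 0 := by ext; simpa using h1
      simp [this]
    · rw [codisjoint_iff, eq_top_iff]
      intro m _
      have : φ m ∈ P ⊔ S := hs ▸ ⟨m, rfl⟩
      obtain ⟨p, hp, s, hs', hps⟩ := Submodule.mem_sup.1 this
      rw [← sub_add_cancel m (τ ⟨p, hp⟩)]
      refine Submodule.add_mem_sup ?_ ⟨_, rfl⟩
      simp only [Submodule.mem_comap, map_sub, hτ, ← hps]
      simpa using hs'
  have hidem := Submodule.isIdempotentElem_projection hc
  refine ⟨_, hidem, ?_⟩
  have := projective_range_idem hidem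
  apply essential_of_singular_quot
  · rw [Submodule.range_projection]
    intro x hx
    simp only [LinearMap.mem_ker] at hx
    simp [hx]
  · rw [Submodule.range_projection]
    intro p hp a ha
    obtain ⟨r, hr, hr0⟩ := ((essentialIn_iff _ _).1 (hS ⟨φ p, hp⟩)).2 a trivial ha
    refine ⟨r, ?_, hr0⟩
    have := congrArg Subtype.val (LinearMap.mem_ker.1 hr)
    simpa using this

theorem kerCS_comp_inj {Q' : Type*} [AddCommGroup Q'] [Module R Q'] {φ : M →ₗ[R] Q}
    {i : Q →ₗ[R] Q'} (hi : Function.Injective i) : KerCS (i ∘ₗ φ) ↔ KerCS φ := by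
  unfold KerCS
  rw [LinearMap.ker_comp_of_ker_eq_bot _ (LinearMap.ker_eq_bot.2 hi)]

theorem kerCS_of_retract {P : Type*} [AddCommGroup P] [Module R P] [Module.Projective R M]
    [Module.Projective R P] (hM : IsCSRickart R M) (p : M →ₗ[R] P) (hp : Function.Surjective p)
    (i : Q →ₗ[R] M) (hi : Function.Injective i) (φ : P →ₗ[R] Q) : KerCS φ := by
  have h1 : KerCS ((i ∘ₗ φ) ∘ₗ p) := hM _
  have h2 := h1.hasDec
  rw [LinearMap.range_comp_of_range_eq_top _ (LinearMap.range_eq_top.2 hp)] at h2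
  exact (kerCS_comp_inj hi).1 h2.kerCS

/-- Independence in elementary terms. -/
def Indep {k : ℕ} (A : Submodule R M) (B : Fin k → Submodule R M) : Prop :=
  ∀ b : Fin k → M, (∀ i, b i ∈ B i) → ∀ a ∈ A, ∑ i, b i + a = 0 → a = 0 ∧ ∀ i, b i = 0

theorem Indep.iSupIndep {k : ℕ} {A : Submodule R M} {B : Fin k → Submodule R M}
    (h : Indep A B) : iSupIndep (fun o : Option (Fin k) => o.elim A B) := by
  classical
  apply iSupIndep_of_dfinsupp_lsum_injective
  rw [injective_iff_map_eq_zero]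
  intro v hv
  have h1 : ∑ i, ((v (some i) : _) : M) + (v none : M) = 0 := by
    rw [← hv, DFinsupp.lsum_apply_apply, DFinsupp.sumAddHom_apply,
      DFinsupp.sum_eq_sum_fintype _ (fun i => by simp), Fintype.sum_option, add_comm]
    rfl
  have h2 := h (fun i => v (some i)) (fun i => (v (some i)).2) _ (v none).2 h1
  ext o
  cases o with
  | none => simpa using! h2.1
  | some i => simpa using! h2.2 i

end Basic
end CSRickartPaper

namespace CSRickartPaper
section Main
open scoped Matrix
universe u
variable {R : Type u} [Ring R]

/-- Condition (5). -/
def WSH (R : Type u) [Ring R] : Prop := ∀ I : Submodule R R, I.FG → HasDec I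

theorem wsh_step {F : Type*} [AddCommGroup F] [Module R F] [Module.Finite R F]
    [Module.Projective R F] (h5 : WSH R) :
    ∀ (n : ℕ) (f : Fin n → (F →ₗ[R] R)), ∃ (E : Module.End R F) (B : Fin n → Submodule R F),
      IsIdempotentElem E ∧ EssentialIn (⨅ i, LinearMap.ker (f i)) (LinearMap.range E) ∧
      Indep (LinearMap.range E) B ∧ (⨆ i, B i) ⊔ LinearMap.range E = ⊤ ∧
      ∀ i, Module.Projective R (B i) ∧ ∃ J : Submodule R R, Nonempty (B i ≃ₗ[R] J) := by
  intro n
  induction n with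
  | zero =>
    intro f
    refine ⟨1, Fin.elim0, IsIdempotentElem.one, ?_, ?_, ?_, fun i => i.elim0⟩
    · rw [essentialIn_iff]
      exact ⟨fun x _ => ⟨x, rfl⟩, fun x _ hx => ⟨1, by simp, by simpa using hx⟩⟩
    · intro b hb a ha h
      exact ⟨by simpa using h, fun i => i.elim0⟩
    · rw [eq_top_iff]; exact fun x _ => Submodule.mem_sup_right ⟨x, rfl⟩
  | succ n ih =>
    intro f
    obtain ⟨E, B, hE, hess, hind, htop, hB⟩ := ih (fun i => f i.castSucc)
    have := projective_range_idem hE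
    have hfg : (LinearMap.range ((f (Fin.last n)).domRestrict (LinearMap.range E))).FG := by
      have : Module.Finite R (LinearMap.range E) := inferInstance
      rw [LinearMap.range_eq_map]
      exact Submodule.FG.map _ Module.Finite.fg_top
    obtain ⟨e, he, hess'⟩ := (h5 _ hfg).kerCS
    rw [essentialIn_iff] at hess hess'
    let E' : Module.End R F := (LinearMap.range E).subtype ∘ₗ e ∘ₗ E.rangeRestrict
    have hEE' : ∀ x, E (E' x) = E' x := fun x => (mem_range_idem hE).1 (e (E.rangeRestrict x)).2
    have hE'r : ∀ x : LinearMap.range E, E' x = e x := by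
      intro x
      have : E.rangeRestrict x = x := by
        ext; exact (mem_range_idem hE).1 x.2
      simp [E', this]
    have hE'E : ∀ x, E' (E x) = E' x := by
      intro x
      exact hE'r ⟨E x, x, rfl⟩
    have hE' : ∀ x, E' (E' x) = E' x := by
      intro x
      have h1 : E' x = e (E.rangeRestrict x) := rfl
      rw [h1, hE'r, idem_apply he]
    have hE'i : IsIdempotentElem E' := LinearMap.ext hE'
    have hDi : IsIdempotentElem (E - E') := by
      ext x
      simp [hEE', hE'E, hE', idem_apply hE]
    refine ⟨E', Fin.snoc B (LinearMap.range (E - E')), hE'i, ?_, ?_, ?_, ?_⟩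
    · rw [essentialIn_iff]
      constructor
      · intro x hx
        simp only [Submodule.mem_iInf] at hx
        have hxE : x ∈ LinearMap.range E :=
          hess.1 (by simp only [Submodule.mem_iInf]; exact fun i => hx _)
        obtain ⟨y, hy⟩ := hess'.1 (show (⟨x, hxE⟩ : LinearMap.range E) ∈ _ from hx (Fin.last n))
        refine ⟨y, ?_⟩
        rw [hE'r, hy]
      · intro x hx hx0
        have hx' := (mem_range_idem hE'i).1 hx
        have hxE : x ∈ LinearMap.range E := (mem_range_idem hE).2 (by rw [← hx', hEE'])
        obtain ⟨r, hr, hr0⟩ := hess'.2 ⟨x, hxE⟩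
          ((mem_range_idem he).2 (by ext; rw [← hE'r]; exact hx'))
          (fun h => hx0 (congrArg Subtype.val h))
        obtain ⟨s, hs, hs0⟩ := hess.2 (r • x) (Submodule.smul_mem _ _ hxE)
          (fun h => hr0 (Subtype.ext h))
        refine ⟨s * r, ?_, by rwa [mul_smul]⟩
        rw [mul_smul]
        simp only [Submodule.mem_iInf] at hs ⊢
        intro i
        refine Fin.lastCases ?_ (fun i => hs i) i
        exact Submodule.smul_mem _ s hr
    · intro b hb a ha hab
      rw [Fin.sum_univ_castSucc] at hab
      have hlast : b (Fin.last n) ∈ LinearMap.range (E - E') := by simpa using hb (Fin.last n)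
      have haE' := (mem_range_idem hE'i).1 ha
      have haE : E a = a := by rw [← haE', hEE']
      have hlD := (mem_range_idem hDi).1 hlast
      have hlE' : E' (b (Fin.last n)) = 0 := by
        rw [← hlD]; simp [hE'E, hE']
      have hlE : E (b (Fin.last n)) = b (Fin.last n) := by
        rw [← hlD]; simp [idem_apply hE, hEE']
      have h1 := hind (fun i => b i.castSucc) (fun i => by simpa using hb i.castSucc)
        (b (Fin.last n) + a) (add_mem ⟨_, hlE⟩ ⟨_, haE⟩) (by rw [← add_assoc]; exact hab)
      have h2 : a = 0 := by
        have := congrArg E' h1.1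
        rwa [map_add, hlE', haE', zero_add, map_zero] at this
      refine ⟨h2, fun i => Fin.lastCases ?_ (fun i => h1.2 i) i⟩
      simpa [h2] using h1.1
    · rw [eq_top_iff, ← htop]
      apply sup_le
      · refine iSup_le fun i => le_sup_of_le_left ?_
        refine le_trans ?_ (le_iSup _ i.castSucc)
        simp
      · rintro _ ⟨x, rfl⟩
        have : E x = (E - E') x + E' x := by simp
        rw [this]
        refine Submodule.add_mem_sup ?_ ⟨x, rfl⟩
        refine Submodule.mem_iSup_of_mem (Fin.last n) ?_
        simp only [Fin.snoc_last]
        exact ⟨x, rfl⟩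
    · intro i
      refine Fin.lastCases ?_ (fun i => ?_) i
      · rw [Fin.snoc_last]
        refine ⟨projective_range_idem hDi, ?_⟩
        let g := (f (Fin.last n)).domRestrict (LinearMap.range (E - E'))
        refine ⟨LinearMap.range g, ⟨LinearEquiv.ofInjective g ?_⟩⟩
        rw [← LinearMap.ker_eq_bot, LinearMap.ker_eq_bot']
        rintro ⟨x, hx⟩ hgx
        have hxD := (mem_range_idem hDi).1 hx
        have hE'x : E' x = 0 := by
          rw [← hxD]; simp [hE'E, hE']
        have hxE : E x = x := by
          rw [← hxD]; simp [idem_apply hE, hEE']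
        have := (mem_range_idem he).1
          (hess'.1 (show (⟨x, ⟨x, hxE⟩⟩ : LinearMap.range E) ∈ _ from hgx))
        have h3 := congrArg Subtype.val this
        rw [← hE'r] at h3
        ext
        exact h3.symm.trans hE'x
      · rw [Fin.snoc_castSucc]
        exact hB i

theorem csr_of_wsh (h5 : WSH R) (n : ℕ) : IsCSRickart R (Fin n → R) := by
  intro φ
  obtain ⟨E, B, hE, hess, -⟩ := wsh_step h5 n (fun i => LinearMap.proj i ∘ₗ φ)
  refine ⟨E, hE, ?_⟩
  convert hess
  ext x
  simp [funext_iff]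

theorem wsh_of_csr (h : ∀ n : ℕ, IsCSRickart R (Fin n → R)) : WSH R := by
  intro I hI
  obtain ⟨n, f, rfl⟩ := (Submodule.fg_iff_exists_fin_linearMap _ _).1 hI
  refine (kerCS_of_retract (h (n + 1)) (LinearMap.funLeft R R Fin.castSucc) ?_
    (LinearMap.single R (fun _ => R) 0) ?_ f).hasDec
  · exact LinearMap.funLeft_surjective_of_injective _ _ _ (Fin.castSucc_injective n)
  · exact Pi.single_injective (M := fun _ : Fin (n + 1) => R) 0

theorem fp_of_csr (h : ∀ n : ℕ, IsCSRickart R (Fin n → R)) (P : Type*) [AddCommGroup P]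
    [Module R P] (_ : Module.Finite R P) (_ : Module.Projective R P) : IsCSRickart R P := by
  obtain ⟨n, p, hp⟩ := Module.Finite.exists_fin' R P
  obtain ⟨i, hi⟩ := Module.projective_lifting_property p LinearMap.id hp
  intro φ
  refine kerCS_of_retract (h n) p hp i ?_ φ
  exact Function.LeftInverse.injective (g := p) (fun x => LinearMap.congr_fun hi x)

theorem six_of_wsh (h5 : WSH R) (Q : Type*) [AddCommGroup Q] [Module R Q]
    (hQ : Module.Projective R Q) (N : Submodule R Q) (hN : N.FG) :
    ∃ (k : ℕ) (P : Fin k → Submodule R Q) (S : Submodule R Q),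
      iSupIndep (fun o : Option (Fin k) => o.elim S P) ∧
      ((⨆ i, P i) ⊔ S = N) ∧
      (∀ i, Module.Projective R (P i) ∧
        ∃ J : Submodule R R, Nonempty ((P i) ≃ₗ[R] J)) ∧
      IsSingularModule R S := by
  classical
  obtain ⟨n, g, rfl⟩ := (Submodule.fg_iff_exists_fin_linearMap _ _).1 hN
  obtain ⟨s, hs⟩ := Module.projective_def.1 hQ
  let T : Finset Q := Finset.univ.biUnion fun j : Fin n => (s (g (Pi.single j 1))).support
  let f : Fin T.card → ((Fin n → R) →ₗ[R] R) := fun t =>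
    Finsupp.lapply (T.equivFin.symm t : Q) ∘ₗ s ∘ₗ g
  have hker : (⨅ i, LinearMap.ker (f i)) = LinearMap.ker g := by
    ext x
    simp only [Submodule.mem_iInf, LinearMap.mem_ker]
    constructor
    · intro hx
      have : s (g x) = 0 := by
        ext t
        by_cases ht : t ∈ T
        · have := hx (T.equivFin ⟨t, ht⟩)
          simpa [f] using this
        · have hx' : x = ∑ j, x j • (Pi.single j 1 : Fin n → R) := pi_eq_sum_univ' x
          rw [hx', map_sum, map_sum, Finsupp.finsetSum_apply]
          refine Finset.sum_eq_zero fun j _ => ?_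
          rw [map_smul, map_smul, Finsupp.smul_apply]
          have : s (g (Pi.single j 1)) t = 0 := by
            by_contra h0
            exact ht (Finset.mem_biUnion.2 ⟨j, Finset.mem_univ _, Finsupp.mem_support_iff.2 h0⟩)
          rw [this, smul_zero]
      exact hs.injective (by rw [this, map_zero])
    · intro hx i
      simp [f, hx]
  obtain ⟨E, B, hE, hess, hind, htop, hB⟩ := wsh_step h5 _ f
  rw [hker] at hess
  refine ⟨T.card, fun i => (B i).map g, (LinearMap.range E).map g, ?_, ?_, ?_, singular_map hess⟩
  · apply Indep.iSupIndep
    intro b hb a ha hab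
    choose c hc hcb using hb
    obtain ⟨a, ha, rfl⟩ := ha
    have h1 : ∑ i, c i + a ∈ LinearMap.ker g := by
      rw [LinearMap.mem_ker, map_add, map_sum, ← hab]
      simp [hcb]
    have h2 := hess.1 h1
    have h3 := hind c hc (a - (∑ i, c i + a)) (sub_mem ha h2) (by abel)
    have h4 : ∀ i, b i = 0 := fun i => by rw [← hcb, h3.2 i, map_zero]
    exact ⟨by simpa [h4] using hab, h4⟩
  · rw [← Submodule.map_iSup, ← Submodule.map_sup, htop, LinearMap.range_eq_map]
  · intro i
    obtain ⟨hp, J, ⟨eJ⟩⟩ := hB i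
    have hinj : Function.Injective (g.submoduleMap (B i)) := by
      rw [← LinearMap.ker_eq_bot, LinearMap.ker_eq_bot']
      intro x hx
      have h1 : g x = 0 := congrArg Subtype.val hx
      have h2 : (x : Fin n → R) ∈ LinearMap.range E := hess.1 h1
      have h3 := hind (Pi.single i (x : Fin n → R)) (fun j => by
        by_cases hj : j = i
        · subst hj; simp
        · simp [hj]) (-x) (neg_mem h2) (by simp)
      ext1
      simpa using h3.1
    let eq := LinearEquiv.ofBijective _ ⟨hinj, LinearMap.submoduleMap_surjective g (B i)⟩
    exact ⟨Module.Projective.of_equiv eq, J, ⟨eq.symm.trans eJ⟩⟩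

theorem wsh_of_six (h6 : ∀ N : Submodule R R, N.FG →
    ∃ (k : ℕ) (P : Fin k → Submodule R R) (S : Submodule R R),
      iSupIndep (fun o : Option (Fin k) => o.elim S P) ∧
      ((⨆ i, P i) ⊔ S = N) ∧
      (∀ i, Module.Projective R (P i) ∧
        ∃ J : Submodule R R, Nonempty ((P i) ≃ₗ[R] J)) ∧
      IsSingularModule R S) : WSH R := by
  classical
  intro I hI
  obtain ⟨k, P, S, hind, hsup, hP, hS⟩ := h6 I hI
  refine ⟨⨆ i, P i, S, ?_, hS, ?_, hsup⟩
  · have hP' : ∀ i, Module.Projective R (P i) := fun i => (hP i).1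
    have hindP : iSupIndep P := hind.comp (Option.some_injective _)
    have hinj := hindP.dfinsupp_lsum_injective
    rw [Submodule.iSup_eq_range_dfinsupp_lsum]
    exact Module.Projective.of_equiv (LinearEquiv.ofInjective _ hinj)
  · have := hind none
    rw [disjoint_comm, disjoint_iff] at this
    rw [eq_bot_iff, ← this]
    refine inf_le_inf_right _ (iSup_le fun i => ?_)
    exact le_iSup₂_of_le (some i) (by simp) le_rfl

/-- ACS in elementary terms. -/
theorem acs_iff (S : Type*) [Ring S] : IsACSRing S ↔ ∀ a : S, ∃ e : S, e * e = e ∧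
    (∀ x, x * a = 0 → x * e = x) ∧
    ∀ x, x * e = x → x ≠ 0 → ∃ r, r * x * a = 0 ∧ r * x ≠ 0 := by
  refine forall_congr' fun a => exists_congr fun e => and_congr_right fun he => ?_
  have he : e * e = e := he
  have hmem : ∀ x, x ∈ idealGen S e ↔ x * e = x := by
    intro x
    constructor
    · rintro ⟨y, rfl⟩; simp [mul_assoc, he]
    · intro h; exact ⟨x, by simpa using h⟩
  have hmem' : ∀ x, x ∈ annElem S a ↔ x * a = 0 := by
    intro x; simp [annElem]
  rw [essentialIn_iff]
  simp only [SetLike.le_def, hmem, hmem', smul_eq_mul]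

theorem acs_equiv {S T : Type*} [Ring S] [Ring T] (f : S ≃+* T) (h : IsACSRing S) :
    IsACSRing T := by
  rw [acs_iff] at h ⊢
  intro a
  obtain ⟨e, he, h1, h2⟩ := h (f.symm a)
  refine ⟨f e, by rw [← map_mul, he], fun x hx => ?_, fun x hx hx0 => ?_⟩
  · have := h1 (f.symm x) (by rw [← map_mul, hx, map_zero])
    have := congrArg f this
    simpa using this
  · obtain ⟨r, hr, hr0⟩ := h2 (f.symm x) (by
      apply f.injective; simpa using hx) (by simpa using hx0)
    refine ⟨f r, ?_, ?_⟩
    · have := congrArg f hr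
      simpa using this
    · intro h0
      apply hr0
      apply f.injective
      simpa using h0

theorem csr_iff {ι : Type*} [Fintype ι] [DecidableEq ι] (R : Type*) [Ring R] :
    IsCSRickart R (ι → R) ↔ ∀ A : Matrix ι ι R, ∃ E : Matrix ι ι R, E * E = E ∧
    (∀ x : ι → R, x ᵥ* A = 0 → x ᵥ* E = x) ∧
    ∀ x : ι → R, x ᵥ* E = x → x ≠ 0 → ∃ r : R, (r • x) ᵥ* A = 0 ∧ r • x ≠ 0 := by
  unfold IsCSRickart
  rw [← (Matrix.toLinearMapRight' (R := R) (m := ι) (n := ι)).toEquiv.forall_congr_right]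
  refine forall_congr' fun A => ?_
  rw [← (Matrix.toLinearMapRight' (R := R) (m := ι) (n := ι)).toEquiv.exists_congr_right]
  refine exists_congr fun E => ?_
  have hid : IsIdempotentElem (M := Module.End R (ι → R)) (Matrix.toLinearMapRight' E) ↔
      E * E = E := by
    unfold IsIdempotentElem
    rw [Module.End.mul_eq_comp, ← Matrix.toLinearMapRight'_mul]
    exact (Matrix.toLinearMapRight' (R := R) (m := ι) (n := ι)).injective.eq_iff
  refine (and_congr_left' hid).trans (and_congr_right fun he => ?_)
  have hmem : ∀ x, x ∈ LinearMap.range (Matrix.toLinearMapRight' E) ↔ x ᵥ* E = x :=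
    fun x => mem_range_idem (hid.2 he)
  refine (essentialIn_iff _ _).trans ?_
  refine and_congr (forall_congr' fun x => imp_congr Iff.rfl (hmem x))
    (forall_congr' fun x => imp_congr (hmem x) Iff.rfl)

theorem acs_matrix_iff {ι : Type*} [Fintype ι] [DecidableEq ι] (R : Type*) [Ring R] :
    IsACSRing (Matrix ι ι R) ↔ IsCSRickart R (ι → R) := by
  rw [acs_iff, csr_iff]
  have hrow : ∀ (X Y : Matrix ι ι R) (i : ι), (X * Y) i = X i ᵥ* Y := fun X Y i => rfl
  refine forall_congr' fun A => exists_congr fun E => and_congr_right fun hE => ?_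
  refine and_congr ⟨fun h x hx => ?_, fun h X hX => ?_⟩ ⟨fun h x hx hx0 => ?_, fun h X hX hX0 => ?_⟩
  · by_cases hne : Nonempty ι
    · obtain ⟨i⟩ := hne
      have := h (fun _ => x) (by ext j k; exact congrFun hx k)
      exact congrFun this i
    · ext i; exact (hne ⟨i⟩).elim
  · funext i
    exact h (X i) (congrFun hX i)
  · obtain ⟨i, hi⟩ := Function.ne_iff.1 hx0
    obtain ⟨r, hr, hr0⟩ := h (fun _ => x) (by ext j k; exact congrFun hx k)
      (fun h0 => hi (congrFun (congrFun h0 i) i))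
    obtain ⟨j, hj⟩ := Function.ne_iff.1 hr0
    have hrx : (r * (show Matrix ι ι R from fun _ => x)) j = (∑ k, r j k) • x := by
      ext l
      simp only [Pi.smul_apply, smul_eq_mul, Finset.sum_mul]
      rfl
    refine ⟨∑ k, r j k, ?_, ?_⟩
    · rw [← hrx]
      exact congrFun hr j
    · rw [← hrx]; exact hj
  · obtain ⟨i, hi⟩ := Function.ne_iff.1 hX0
    obtain ⟨r, hr, hr0⟩ := h (X i) (congrFun hX i) hi
    have hrX : Matrix.single i i r * X = fun j => if j = i then r • X i else 0 := by
      ext j l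
      by_cases hj : j = i
      · subst hj; simp
      · simp [hj]
    refine ⟨Matrix.single i i r, ?_, ?_⟩
    · funext j
      rw [hrow, hrX]
      by_cases hj : j = i
      · simp only [hj, if_true]
        exact hr
      · simp only [hj, if_false]
        exact Matrix.zero_vecMul A
    · rw [hrX]
      intro h0
      apply hr0
      have := congrFun h0 i
      simp only [if_true] at this
      exact this

theorem csr_matrix_iff (m : ℕ) (hm : 0 < m) :
    (∀ k : ℕ, IsCSRickart (Matrix (Fin m) (Fin m) R) (Fin k → Matrix (Fin m) (Fin m) R)) ↔
      ∀ n : ℕ, IsCSRickart R (Fin n → R) := by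
  have hmn : ∀ k : ℕ,
      IsCSRickart (Matrix (Fin m) (Fin m) R) (Fin k → Matrix (Fin m) (Fin m) R) ↔
      IsCSRickart R (Fin k × Fin m → R) := by
    intro k
    rw [← acs_matrix_iff, ← acs_matrix_iff]
    exact ⟨acs_equiv (Matrix.compRingEquiv _ _ _), acs_equiv (Matrix.compRingEquiv _ _ _).symm⟩
  simp only [hmn]
  constructor
  · intro h n φ
    have hinj : Function.Injective (fun i : Fin n => (i, (⟨0, hm⟩ : Fin m))) :=
      fun i j hij => (Prod.ext_iff.1 hij).1
    refine kerCS_of_retract (h n) (LinearMap.funLeft R R (fun i => (i, ⟨0, hm⟩)))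
      (LinearMap.funLeft_surjective_of_injective _ _ _ hinj)
      (LinearMap.funLeft R R Prod.fst)
      (LinearMap.funLeft_injective_of_surjective _ _ _ (fun i => ⟨(i, ⟨0, hm⟩), rfl⟩)) φ
  · intro h k
    exact fp_of_csr h _ inferInstance inferInstance

end Main
end CSRickartPaper

namespace CSRickartPaper

universe u

/-- Characterizations of right weakly semihereditary rings (Theorem 4.4). -/
theorem weakly_semihereditary_tfae {R : Type u} [Ring R] :
    List.TFAE
      [ ∀ (P : Type u) [AddCommGroup P] [Module R P],
          Module.Finite R P → Module.Projective R P → IsCSRickart R P,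
        ∀ n : ℕ, IsCSRickart R (Fin n → R),
        ∀ n : ℕ, IsACSRing (Matrix (Fin n) (Fin n) R),
        ∃ m : ℕ, 0 < m ∧
          ∀ I : Submodule (Matrix (Fin m) (Fin m) R) (Matrix (Fin m) (Fin m) R),
            I.FG → ∃ P S : Submodule (Matrix (Fin m) (Fin m) R) (Matrix (Fin m) (Fin m) R),
              Module.Projective (Matrix (Fin m) (Fin m) R) P ∧
              IsSingularModule (Matrix (Fin m) (Fin m) R) S ∧ P ⊓ S = ⊥ ∧ P ⊔ S = I,
        ∀ I : Submodule R R, I.FG →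
          ∃ P S : Submodule R R, Module.Projective R P ∧ IsSingularModule R S ∧
            P ⊓ S = ⊥ ∧ P ⊔ S = I,
        ∀ (Q : Type u) [AddCommGroup Q] [Module R Q], Module.Projective R Q →
          ∀ N : Submodule R Q, N.FG →
            ∃ (k : ℕ) (P : Fin k → Submodule R Q) (S : Submodule R Q),
              iSupIndep (fun o : Option (Fin k) => o.elim S P) ∧
              ((⨆ i, P i) ⊔ S = N) ∧
              (∀ i, Module.Projective R (P i) ∧
                ∃ J : Submodule R R, Nonempty ((P i) ≃ₗ[R] J)) ∧
              IsSingularModule R S ] := by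
  have h25 : (∀ n : ℕ, IsCSRickart R (Fin n → R)) ↔ WSH R := ⟨wsh_of_csr, csr_of_wsh⟩
  tfae_have 1 → 2 := fun h n => h _ inferInstance inferInstance
  tfae_have 2 → 1 := fun h P _ _ => fp_of_csr h P
  tfae_have 2 ↔ 3 := forall_congr' fun n => (acs_matrix_iff R).symm
  tfae_have 2 ↔ 5 := h25
  tfae_have 2 → 4 := fun h => ⟨1, one_pos, wsh_of_csr ((csr_matrix_iff 1 one_pos).2 h)⟩
  tfae_have 4 → 2 := fun ⟨m, hm, h⟩ => (csr_matrix_iff m hm).1 (csr_of_wsh h)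
  tfae_have 5 → 6 := fun h Q _ _ hQ N hN => six_of_wsh h Q hQ N hN
  tfae_have 6 → 5 := fun h => wsh_of_six (h R inferInstance)
  tfae_finish

end CSRickartPaper
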